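/- Let n ≥ 1 be an integer and m₁, m₂ coprime positive integers with m₁ ≠ m₂; set d := (m₁−m₂)/(m₁+m₂), M := (n+1)(m₁+m₂), F_n := (y + d x^{n+1}, (n+1)x^{2n+1} + (n+1)d x^n y), and I_M := (y − x^{n+1})^{m₁}(y + x^{n+1})^{m₂}. Let p ∈ ℝ[x,y] be quasi-homogeneous of type t = (1,n+1) of some degree j ≥ 0 with ∇p·F_n = 0. Then: if M divides j, there exists c ∈ ℝ with p = c·I_M^{j/M}; and if M does not divide j, then p = 0. -/

import Mathlib

open MvPolynomial

/-- A polynomial in two variables is quasi-homogeneous of type `(t₁,t₂)` and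
degree `k` if every monomial `x^a y^b` occurring in it satisfies `t₁a + t₂b = k`. -/
def IsQH (t₁ t₂ k : ℕ) (p : MvPolynomial (Fin 2) ℝ) : Prop :=
  ∀ m ∈ p.support, t₁ * m 0 + t₂ * m 1 = k

/-- `∇p · (P,Q)` for a planar polynomial vector field `(P,Q)`. -/
noncomputable def gradDot (p P Q : MvPolynomial (Fin 2) ℝ) : MvPolynomial (Fin 2) ℝ :=
  pderiv 0 p * P + pderiv 1 p * Q

noncomputable def dehom : MvPolynomial (Fin 2) ℝ →ₐ[ℝ] Polynomial ℝ :=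
  aeval ![1, Polynomial.X]

lemma dehom_X0 : dehom (X 0) = 1 := by simp [dehom]
lemma dehom_X1 : dehom (X 1) = Polynomial.X := by simp [dehom]
lemma dehom_C (c : ℝ) : dehom (C c) = Polynomial.C c := by
  simp [dehom]

lemma dehom_pderiv (p : MvPolynomial (Fin 2) ℝ) :
    dehom (pderiv 1 p) = Polynomial.derivative (dehom p) := by
  induction p using MvPolynomial.induction_on with
  | C a => simp [dehom_C]
  | add p q hp hq => simp [hp, hq]
  | mul_X p i hp =>
    rw [Derivation.leibniz]
    fin_cases i
    · simp [hp, dehom_X0, pderiv_X]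
    · simp [hp, dehom_X1, pderiv_X]
      ring

lemma dehom_monomial (m : Fin 2 →₀ ℕ) (a : ℝ) :
    dehom (monomial m a) = Polynomial.monomial (m 1) a := by
  rw [dehom, aeval_monomial, Finsupp.prod_fintype _ _ (by simp)]
  simp [Polynomial.C_mul_X_pow_eq_monomial]

lemma qh_iff (n j : ℕ) (p : MvPolynomial (Fin 2) ℝ) :
    IsQH 1 (n + 1) j p ↔ IsWeightedHomogeneous ![1, n + 1] p j := by
  have key : ∀ m : Fin 2 →₀ ℕ, Finsupp.weight ![1, n + 1] m = 1 * m 0 + (n + 1) * m 1 := by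
    intro m
    rw [Finsupp.weight_apply, Finsupp.sum_fintype _ _ (by simp)]
    simp [mul_comm]
  unfold IsQH IsWeightedHomogeneous
  simp only [mem_support_iff, key]

lemma dehom_inj (n j : ℕ) (p : MvPolynomial (Fin 2) ℝ) (hp : IsQH 1 (n + 1) j p)
    (h : dehom p = 0) : p = 0 := by
  ext m
  rw [coeff_zero]
  by_contra hm
  have hms : m ∈ p.support := by simpa using hm
  have h1 : (dehom p).coeff (m 1) = p.coeff m := by
    conv_lhs => rw [p.as_sum, map_sum, Polynomial.finset_sum_coeff]
    rw [Finset.sum_eq_single m]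
    · simp [dehom_monomial]
    · intro b hb hbm
      rw [dehom_monomial, Polynomial.coeff_monomial, if_neg]
      intro h1
      apply hbm
      have e1 := hp b hb
      have e2 := hp m hms
      rw [h1] at e1
      ext i
      fin_cases i
      · simp; omega
      · simpa using h1
    · intro h; exact absurd hms h
  rw [h] at h1
  exact hm (by simpa using h1.symm)

lemma euler (n j : ℕ) (p : MvPolynomial (Fin 2) ℝ) (hp : IsQH 1 (n + 1) j p) :
    dehom (pderiv 0 p) + ((n : Polynomial ℝ) + 1) * Polynomial.X *
      Polynomial.derivative (dehom p) = (j : Polynomial ℝ) * dehom p := by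
  have h := ((qh_iff n j p).1 hp).sum_weight_X_mul_pderiv
  have h2 := congrArg dehom h
  simp [dehom_X0, dehom_X1, dehom_pderiv] at h2
  rw [← h2]; ring

open Polynomial in
lemma ode_solve (N j d : ℝ) (hN : N ≠ 0) (f : Polynomial ℝ) (hf : f ≠ 0)
    (h : Polynomial.C N * (Polynomial.X ^ 2 - 1) * derivative f
      = Polynomial.C j * (Polynomial.X + Polynomial.C d) * f) :
    ∃ (a b : ℕ) (c : ℝ), f = Polynomial.C c * ((Polynomial.X - 1) ^ a * (Polynomial.X + 1) ^ b) ∧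
      N * (2 * a) = j * (1 + d) ∧ N * (2 * b) = j * (1 - d) := by
  obtain ⟨f1, h1, h1'⟩ := Polynomial.exists_eq_pow_rootMultiplicity_mul_and_not_dvd f hf 1
  have hf1 : f1 ≠ 0 := by rintro rfl; simp at h1'
  obtain ⟨g, h2, h2'⟩ := Polynomial.exists_eq_pow_rootMultiplicity_mul_and_not_dvd f1 hf1 (-1)
  generalize rootMultiplicity 1 f = a at *
  generalize rootMultiplicity (-1) f1 = b at *
  rw [Polynomial.dvd_iff_isRoot] at h1' h2'
  have hg1 : g.eval 1 ≠ 0 := by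
    intro h0; apply h1'; rw [h2]; simp [h0]
  have hgm : g.eval (-1) ≠ 0 := h2'
  simp only [map_neg, map_one, sub_neg_eq_add] at h1 h2
  have hX1 : (Polynomial.X - 1 : Polynomial ℝ) ≠ 0 := by
    simpa using Polynomial.X_sub_C_ne_zero (1 : ℝ)
  have hX2 : (Polynomial.X + 1 : Polynomial ℝ) ≠ 0 := by
    simpa using Polynomial.X_add_C_ne_zero (1 : ℝ)
  have dpow : ∀ (q : Polynomial ℝ) (k : ℕ), q * derivative (q ^ k) =
      (k : Polynomial ℝ) * q ^ k * derivative q := by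
    intro q k
    cases k with
    | zero => simp
    | succ k => rw [Polynomial.derivative_pow]; simp; ring
  have da := dpow (Polynomial.X - 1) a
  have db := dpow (Polynomial.X + 1) b
  have e1 : derivative (Polynomial.X - 1 : Polynomial ℝ) = 1 := by simp
  have e2 : derivative (Polynomial.X + 1 : Polynomial ℝ) = 1 := by simp
  rw [e1] at da
  rw [e2] at db
  have key : Polynomial.C N * (((a : Polynomial ℝ) * (Polynomial.X + 1)
      + (b : Polynomial ℝ) * (Polynomial.X - 1)) * g
      + (Polynomial.X ^ 2 - 1) * derivative g) = Polynomial.C j * (Polynomial.X + Polynomial.C d) * g := by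
    have hne : ((Polynomial.X - 1) ^ a * (Polynomial.X + 1) ^ b : Polynomial ℝ) ≠ 0 :=
      mul_ne_zero (pow_ne_zero _ hX1) (pow_ne_zero _ hX2)
    apply mul_left_cancel₀ hne
    rw [h1, h2, derivative_mul, derivative_mul] at h
    linear_combination h - Polynomial.C N * (Polynomial.X + 1) * (Polynomial.X + 1) ^ b * g * da
      - Polynomial.C N * (Polynomial.X - 1) * (Polynomial.X - 1) ^ a * g * db
  have k1 := congrArg (eval 1) key
  have k2 := congrArg (eval (-1)) key
  simp at k1 k2
  have r1 : N * (2 * a) = j * (1 + d) := by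
    apply mul_right_cancel₀ hg1; linear_combination k1
  have r2 : N * (2 * b) = j * (1 - d) := by
    apply mul_right_cancel₀ hgm; linear_combination -k2
  have s1 : N * (a + b) = j := by linear_combination (r1 + r2) / 2
  have s2 : N * (a - b) = j * d := by linear_combination (r1 - r2) / 2
  have t1 := congrArg Polynomial.C s1
  have t2 := congrArg Polynomial.C s2
  simp only [map_mul, map_add, map_sub, map_natCast] at t1 t2
  have z : (Polynomial.C N * ((Polynomial.X - 1) * (Polynomial.X + 1))) * derivative g = 0 := by
    linear_combination key - Polynomial.X * g * t1 - g * t2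
  have hg' : derivative g = 0 := by
    rcases mul_eq_zero.1 z with h0 | h0
    · exact absurd h0 (mul_ne_zero (by simpa using hN) (mul_ne_zero hX1 hX2))
    · exact h0
  refine ⟨a, b, g.coeff 0, ?_, r1, r2⟩
  rw [← Polynomial.eq_C_of_derivative_eq_zero hg', h1, h2]
  ring

/-- The kernel of `ℓ` consists exactly of the powers of the primitive first
integral `I_M`: a quasi-homogeneous polynomial first integral of `F_n` of
degree `j` is a scalar multiple of `I_M^{j/M}` when `M ∣ j`, and is `0`
otherwise. -/
theorem kernel_of_homological_operator
    (n m₁ m₂ : ℕ) (hn : 1 ≤ n) (hm₁ : 0 < m₁) (hm₂ : 0 < m₂)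
    (hcop : Nat.Coprime m₁ m₂) (hne : m₁ ≠ m₂)
    (j : ℕ) (p : MvPolynomial (Fin 2) ℝ) (hp : IsQH 1 (n + 1) j p)
    (hker : gradDot p
        (X 1 + C (((m₁ : ℝ) - (m₂ : ℝ)) / ((m₁ : ℝ) + (m₂ : ℝ))) * X 0 ^ (n + 1))
        (C ((n : ℝ) + 1) * X 0 ^ (2 * n + 1)
          + C (((n : ℝ) + 1) * (((m₁ : ℝ) - (m₂ : ℝ)) / ((m₁ : ℝ) + (m₂ : ℝ))))
            * X 0 ^ n * X 1) = 0) :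
    ((n + 1) * (m₁ + m₂) ∣ j →
      ∃ c : ℝ, p = C c * ((X 1 - X 0 ^ (n + 1)) ^ m₁ * (X 1 + X 0 ^ (n + 1)) ^ m₂)
        ^ (j / ((n + 1) * (m₁ + m₂)))) ∧
    (¬ (n + 1) * (m₁ + m₂) ∣ j → p = 0) := by
  have main : p ≠ 0 → (n + 1) * (m₁ + m₂) ∣ j ∧ ∃ c : ℝ,
      p = C c * ((X 1 - X 0 ^ (n + 1)) ^ m₁ * (X 1 + X 0 ^ (n + 1)) ^ m₂)
        ^ (j / ((n + 1) * (m₁ + m₂))) := by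
    intro hp0
    have hf : dehom p ≠ 0 := fun h => hp0 (dehom_inj n j p hp h)
    have hE := euler n j p hp
    have hk := congrArg dehom hker
    have hs : (m₁ : ℝ) + m₂ ≠ 0 := by positivity
    obtain ⟨d, hd⟩ : ∃ d : ℝ, d = ((m₁ : ℝ) - m₂) / ((m₁ : ℝ) + m₂) := ⟨_, rfl⟩
    rw [← hd] at hk
    simp only [gradDot, map_add, map_mul, map_pow, dehom_X0, dehom_X1, dehom_C, dehom_pderiv,
      map_zero, one_pow, mul_one, map_natCast, map_one] at hk
    obtain ⟨a, b, c, hfc, ha, hb⟩ := ode_solve ((n : ℝ) + 1) j d (by positivity) (dehom p) hf (by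
      simp only [map_add, map_natCast, map_one]
      linear_combination (Polynomial.X + Polynomial.C d) * hE - hk)
    have ha' : a * ((n + 1) * (m₁ + m₂)) = j * m₁ := by
      have : (a : ℝ) * (((n : ℝ) + 1) * (m₁ + m₂)) = j * m₁ := by
        rw [hd] at ha; field_simp at ha; linear_combination ha / 2
      exact_mod_cast this
    have hb' : b * ((n + 1) * (m₁ + m₂)) = j * m₂ := by
      have : (b : ℝ) * (((n : ℝ) + 1) * (m₁ + m₂)) = j * m₂ := by
        rw [hd] at hb; field_simp at hb; linear_combination hb / 2
      exact_mod_cast this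
    have hdvd : (n + 1) * (m₁ + m₂) ∣ j := by
      have := Nat.dvd_gcd (Dvd.intro_left _ ha') (Dvd.intro_left _ hb')
      rwa [Nat.gcd_mul_left, hcop.gcd_eq_one, mul_one] at this
    refine ⟨hdvd, c, ?_⟩
    obtain ⟨k, hkj⟩ := hdvd
    have hM : 0 < (n + 1) * (m₁ + m₂) := by positivity
    have hq : j / ((n + 1) * (m₁ + m₂)) = k := by rw [hkj, Nat.mul_div_cancel_left _ hM]
    rw [hq]
    have hak : a = m₁ * k := by
      apply Nat.eq_of_mul_eq_mul_right hM; rw [ha', hkj]; ring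
    have hbk : b = m₂ * k := by
      apply Nat.eq_of_mul_eq_mul_right hM; rw [hb', hkj]; ring
    rw [← sub_eq_zero]
    apply dehom_inj n j
    · rw [qh_iff]
      have hp' := (qh_iff n j p).1 hp
      have hx0 : IsWeightedHomogeneous ![1, n + 1] ((X 0 : MvPolynomial (Fin 2) ℝ) ^ (n + 1)) (n + 1) := by
        simpa using (isWeightedHomogeneous_X ℝ ![1, n + 1] (0 : Fin 2)).pow (n + 1)
      have hx1 : IsWeightedHomogeneous ![1, n + 1] (X 1 : MvPolynomial (Fin 2) ℝ) (n + 1) := by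
        simpa using isWeightedHomogeneous_X ℝ ![1, n + 1] (1 : Fin 2)
      have hu := Submodule.sub_mem (weightedHomogeneousSubmodule ℝ ![1, n + 1] (n + 1)) hx1 hx0
      have hv := Submodule.add_mem (weightedHomogeneousSubmodule ℝ ![1, n + 1] (n + 1)) hx1 hx0
      rw [mem_weightedHomogeneousSubmodule] at hu hv
      have hI := (isWeightedHomogeneous_C ![1, n + 1] c).mul (((hu.pow m₁).mul (hv.pow m₂)).pow k)
      have hdeg : 0 + k • (m₁ • (n + 1) + m₂ • (n + 1)) = j := by
        rw [hkj]; simp only [smul_eq_mul]; ring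
      rw [hdeg] at hI
      exact Submodule.sub_mem (weightedHomogeneousSubmodule ℝ ![1, n + 1] j) hp' hI
    · simp only [map_sub, map_mul, map_pow, map_add, dehom_X0, dehom_X1, dehom_C, one_pow]
      rw [hfc, hak, hbk, mul_pow, ← pow_mul, ← pow_mul, sub_self]
  constructor
  · intro _
    by_cases hp0 : p = 0
    · exact ⟨0, by simp [hp0]⟩
    · exact (main hp0).2
  · intro hnd
    by_contra hp0
    exact hnd (main hp0).1
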